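/- arXiv:2012.14498 — 2 statements merged into one kernel-verified Lean document; each statement's English description precedes it below -/
import Mathlib

section
/- Let X be a geometric random variable with parameter p ∈ (0,1). Then for every C > 0, E[ |X − EX|² · 1{|X − EX| ≥ C} ] ≤ 3·Var(X)/(C·p). -/
open scoped Classical

/-!
On the event `C ≤ |Y|` one has `C * Y ^ 2 ≤ |Y| ^ 3 = |Y| * |Y| ^ 2`, so by Cauchy–Schwarz the
truncated second moment of `Y` is at most `√(E Y ^ 2 * E Y ^ 4) / C`. For `Y = X - E X` with `X`
geometric and `v = Var X = (1 - p) / p ^ 2`, the factorial moments `E X(X-1)⋯(X-k+1) = k! (E X) ^ k`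
yield `E Y ^ 4 = v * (9 * v + 1)`, which is at most `9 * v / p ^ 2`.
-/

section Truncation

theorem sq_le_mul_of_hasSum_of_sq_le_mul {ι R : Type*} [CommSemiring R] [LinearOrder R]
    [IsStrictOrderedRing R] [ExistsAddOfLE R] [TopologicalSpace R] [OrderClosedTopology R]
    [ContinuousMul R] {r f g : ι → R} {a b c : R} (hr : HasSum r c) (hf : HasSum f a)
    (hg : HasSum g b) (hf₀ : ∀ i, 0 ≤ f i) (hg₀ : ∀ i, 0 ≤ g i)
    (hrfg : ∀ i, r i ^ 2 ≤ f i * g i) : c ^ 2 ≤ a * b :=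
  le_of_tendsto_of_tendsto' (Filter.Tendsto.pow hr 2) (Filter.Tendsto.mul hf hg) fun s ↦
    Finset.sum_sq_le_sum_mul_sum_of_sq_le_mul s (fun i _ ↦ hf₀ i) (fun i _ ↦ hg₀ i) fun i _ ↦ hrfg i

theorem sq_mul_ite_le_abs_le {R : Type*} [CommRing R] [LinearOrder R] [IsStrictOrderedRing R]
    {C w y : R} (hC : 0 ≤ C) :
    (C * (w * if C ≤ |y| then y ^ 2 else 0)) ^ 2 ≤ w * y ^ 2 * (w * y ^ 4) := by
  split_ifs with hy
  · have hCy : C ^ 2 ≤ y ^ 2 := sq_le_sq.2 ((abs_of_nonneg hC).trans_le hy)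
    calc (C * (w * y ^ 2)) ^ 2 = C ^ 2 * (w * y ^ 2) ^ 2 := mul_pow ..
      _ ≤ y ^ 2 * (w * y ^ 2) ^ 2 := by gcongr
      _ = w * y ^ 2 * (w * y ^ 4) := by ring
  · calc (C * (w * 0)) ^ 2 = 0 := by ring
      _ ≤ (w * y ^ 3) ^ 2 := sq_nonneg _
      _ = w * y ^ 2 * (w * y ^ 4) := by ring

theorem tsum_mul_ite_le_abs_le_sqrt_div {ι : Type*} {w y : ι → ℝ} {C m₂ m₄ : ℝ} (hC : 0 < C)
    (hw : ∀ i, 0 ≤ w i) (h₂ : HasSum (fun i ↦ w i * y i ^ 2) m₂)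
    (h₄ : HasSum (fun i ↦ w i * y i ^ 4) m₄) :
    ∑' i, w i * (if C ≤ |y i| then y i ^ 2 else 0) ≤ √(m₂ * m₄) / C := by
  have hw₂ (i : ι) : 0 ≤ w i * y i ^ 2 := mul_nonneg (hw i) (sq_nonneg _)
  have hw₄ (i : ι) : 0 ≤ w i * y i ^ 4 := mul_nonneg (hw i) (by positivity)
  have hsummable : Summable fun i ↦ w i * (if C ≤ |y i| then y i ^ 2 else 0) := by
    refine h₂.summable.of_nonneg_of_le (fun i ↦ ?_) fun i ↦ ?_ <;> split_ifs <;> simp [hw₂]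
  rw [le_div_iff₀' hC]
  exact Real.le_sqrt_of_sq_le <| sq_le_mul_of_hasSum_of_sq_le_mul (hsummable.hasSum.mul_left C)
    h₂ h₄ hw₂ hw₄ fun _ ↦ sq_mul_ite_le_abs_le hC.le

end Truncation

section FallingFactorial

open Nat

variable {R : Type*} [CommRing R]

theorem cast_descFactorial_succ (n k : ℕ) :
    (n.descFactorial (k + 1) : R) = (n - k) * n.descFactorial k := by
  obtain hnk | hkn := lt_or_ge n k
  · simp [descFactorial_of_lt hnk]
  · rw [descFactorial_succ, cast_mul, cast_sub hkn]

theorem cast_sub_sq_eq_descFactorial (n : ℕ) (a : R) :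
    (n - a) ^ 2 = n.descFactorial 2 + (1 - 2 * a) * n.descFactorial 1
      + a ^ 2 * n.descFactorial 0 := by
  simp only [cast_descFactorial_succ, descFactorial_zero]
  push_cast
  ring

theorem cast_sub_pow_four_eq_descFactorial (n : ℕ) (a : R) :
    (n - a) ^ 4 = n.descFactorial 4 + (6 - 4 * a) * n.descFactorial 3
      + (7 - 12 * a + 6 * a ^ 2) * n.descFactorial 2
      + (1 - 4 * a + 6 * a ^ 2 - 4 * a ^ 3) * n.descFactorial 1
      + a ^ 4 * n.descFactorial 0 := by
  simp only [cast_descFactorial_succ, descFactorial_zero]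
  push_cast
  ring

end FallingFactorial

section GeometricMoments

open Nat

variable {𝕜 : Type*} [NormedField 𝕜] {p : 𝕜}

theorem ne_zero_of_norm_one_sub_lt_one (hp : ‖1 - p‖ < 1) : p ≠ 0 := by
  rintro rfl
  simp at hp

theorem hasSum_geometric_mul_descFactorial (hp : ‖1 - p‖ < 1) (k : ℕ) :
    HasSum (fun n : ℕ ↦ p * (1 - p) ^ n * n.descFactorial k) (k ! * ((1 - p) / p) ^ k) := by
  have hp₀ := ne_zero_of_norm_one_sub_lt_one hp
  have hvanish (n : ℕ) (hn : n ∉ Set.range (· + k)) :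
      p * (1 - p) ^ n * (n.descFactorial k : 𝕜) = 0 := by
    have hnk : n < k := by
      by_contra! hkn
      exact hn ⟨n - k, Nat.sub_add_cancel hkn⟩
    simp [descFactorial_of_lt hnk]
  rw [← (add_left_injective k).hasSum_iff hvanish]
  convert! (hasSum_choose_mul_geometric_of_norm_lt_one k hp).mul_left
    (p * (1 - p) ^ k * (k ! : 𝕜)) using 1
  · ext n
    simp only [Function.comp_apply, descFactorial_eq_factorial_mul_choose, cast_mul]
    ring
  · rw [sub_sub_cancel, div_pow, pow_succ]
    field_simp

theorem hasSum_geometric_mul_sub_mean_sq (hp : ‖1 - p‖ < 1) :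
    HasSum (fun n : ℕ ↦ p * (1 - p) ^ n * (n - (1 - p) / p) ^ 2) ((1 - p) / p ^ 2) := by
  have hp₀ := ne_zero_of_norm_one_sub_lt_one hp
  have h := hasSum_geometric_mul_descFactorial hp
  convert! ((h 2).add ((h 1).mul_left (1 - 2 * ((1 - p) / p)))).add
    ((h 0).mul_left (((1 - p) / p) ^ 2)) using 1
  · ext n
    rw [cast_sub_sq_eq_descFactorial]
    ring
  · simp only [factorial]
    field_simp
    push_cast
    ring

theorem hasSum_geometric_mul_sub_mean_pow_four (hp : ‖1 - p‖ < 1) :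
    HasSum (fun n : ℕ ↦ p * (1 - p) ^ n * (n - (1 - p) / p) ^ 4)
      ((1 - p) / p ^ 2 * (9 * ((1 - p) / p ^ 2) + 1)) := by
  have hp₀ := ne_zero_of_norm_one_sub_lt_one hp
  have h := hasSum_geometric_mul_descFactorial hp
  set μ := (1 - p) / p with hμ
  convert! ((((h 4).add ((h 3).mul_left (6 - 4 * μ))).add
    ((h 2).mul_left (7 - 12 * μ + 6 * μ ^ 2))).add
    ((h 1).mul_left (1 - 4 * μ + 6 * μ ^ 2 - 4 * μ ^ 3))).add ((h 0).mul_left (μ ^ 4)) using 1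
  · ext n
    rw [cast_sub_pow_four_eq_descFactorial]
    ring
  · simp only [factorial, hμ]
    field_simp
    push_cast
    ring

end GeometricMoments

theorem stmt_16 (p : ℝ) (hp : p ∈ Set.Ioo (0:ℝ) 1) (C : ℝ) (hC : 0 < C) :
    (∑' k : ℕ, p * (1 - p) ^ k *
        (if C ≤ |(k : ℝ) - (1 - p) / p| then ((k : ℝ) - (1 - p) / p) ^ 2 else 0))
      ≤ 3 * ((1 - p) / p ^ 2) / (C * p) := by
  obtain ⟨hp₀, hp₁⟩ := hp
  have hq : 0 < 1 - p := sub_pos.2 hp₁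
  have hnorm : ‖1 - p‖ < 1 := by
    rw [Real.norm_of_nonneg hq.le]
    exact sub_lt_self 1 hp₀
  set v := (1 - p) / p ^ 2 with hv
  have hfourth : 9 * v + 1 ≤ (3 / p) ^ 2 := by
    rw [hv, div_pow, mul_div_assoc', div_add_one (by positivity)]
    have hp_sq : p ^ 2 ≤ p := pow_le_of_le_one hp₀.le hp₁.le two_ne_zero
    gcongr
    linarith
  have hsqrt : √(v * (v * (9 * v + 1))) ≤ 3 * v / p := by
    refine Real.sqrt_le_iff.2 ⟨by positivity, ?_⟩
    calc v * (v * (9 * v + 1)) ≤ v * (v * (3 / p) ^ 2) := by gcongr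
      _ = (3 * v / p) ^ 2 := by ring
  calc _ ≤ √(v * (v * (9 * v + 1))) / C :=
        tsum_mul_ite_le_abs_le_sqrt_div hC (fun k ↦ by positivity)
          (hasSum_geometric_mul_sub_mean_sq hnorm) (hasSum_geometric_mul_sub_mean_pow_four hnorm)
    _ ≤ 3 * v / p / C := by gcongr
    _ = 3 * v / (C * p) := by rw [div_div, mul_comm p]
end

section
/- ∫₁^∞ P₂(x)/(2x²) dx = (1/2)·log(2π) − 11/12, where P₂(x) = (x − ⌊x⌋)² − (x − ⌊x⌋) + 1/6 is the second periodized Bernoulli polynomial. -/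
open MeasureTheory

/-!
Integrating `∫ f` by parts twice on each interval `[j, j + 1]`, with the Bernoulli polynomials
`B₁` and `B₂` as successive antiderivatives of `1`, gives the Euler–Maclaurin formula whose
remainder is `-½ ∫ B₂({x}) f''(x) dx`. For `f = log` the trapezoidal sum over `[1, n + 1]` is
`log (n + 1)! - ½ log (n + 1)`, so the formula reads
`∫₁ⁿ⁺¹ B₂({x}) / (2x²) dx = log s(n + 1) + ½ log 2 - 11/12 - 1/(12(n + 1))`,
where `s n = n! / (√(2n) (n/e)ⁿ)` tends to `√π` by Stirling's formula.
-/

open Set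

variable {E : Type*} [NormedAddCommGroup E]

section UnitIntervals

variable {a : ℝ} {j n : ℕ} {g : ℝ → E}

lemma Icc_unit_subset (hj : j < n) : Icc (a + j) (a + j + 1) ⊆ Icc a (a + n) := by
  have hj' : (j : ℝ) + 1 ≤ n := mod_cast hj
  exact Icc_subset_Icc (by simp) (by linarith)

lemma intervalIntegrable_unit_of_lt (hg : IntervalIntegrable g volume a (a + n)) (hj : j < n) :
    IntervalIntegrable g volume (a + j) (a + j + 1) :=
  hg.mono_set <| by simpa [uIcc_of_le] using Icc_unit_subset hj

lemma sum_integral_unit_intervals [NormedSpace ℝ E]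
    (hg : IntervalIntegrable g volume a (a + n)) :
    ∑ j ∈ Finset.range n, ∫ x in a + j..a + j + 1, g x = ∫ x in a..a + n, g x := by
  simpa [add_assoc] using intervalIntegral.sum_integral_adjacent_intervals
    (a := fun j ↦ a + j) fun j hj ↦ by simpa [add_assoc] using intervalIntegrable_unit_of_lt hg hj

end UnitIntervals

section BernoulliFract

variable [NormedSpace ℝ E]

lemma exists_norm_bernoulliFun_fract_le (k : ℕ) :
    ∃ C, ∀ x : ℝ, ‖bernoulliFun k (Int.fract x)‖ ≤ C := by
  obtain ⟨C, hC⟩ := isCompact_Icc.exists_bound_of_continuousOn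
    (continuous_bernoulliFun (k := k)).continuousOn
  exact ⟨C, fun x ↦ hC _ ⟨Int.fract_nonneg x, (Int.fract_lt_one x).le⟩⟩

lemma integrable_bernoulliFun_fract_smul {μ : Measure ℝ} {g : ℝ → E} (k : ℕ)
    (hg : Integrable g μ) : Integrable (fun x ↦ bernoulliFun k (Int.fract x) • g x) μ := by
  obtain ⟨C, hC⟩ := exists_norm_bernoulliFun_fract_le k
  have hmeas : Measurable fun x : ℝ ↦ bernoulliFun k (Int.fract x) :=
    (continuous_bernoulliFun (k := k)).measurable.comp measurable_fract
  exact hg.bdd_smul C hmeas.aestronglyMeasurable (.of_forall hC)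

lemma intervalIntegrable_bernoulliFun_fract_smul {a b : ℝ} {g : ℝ → E} (k : ℕ)
    (hg : IntervalIntegrable g volume a b) :
    IntervalIntegrable (fun x ↦ bernoulliFun k (Int.fract x) • g x) volume a b :=
  ⟨integrable_bernoulliFun_fract_smul k hg.1, integrable_bernoulliFun_fract_smul k hg.2⟩

lemma integral_bernoulliFun_fract_smul_unit (k : ℕ) (a : ℤ) (g : ℝ → E) :
    ∫ x in (a : ℝ)..a + 1, bernoulliFun k (Int.fract x) • g x
      = ∫ x in (a : ℝ)..a + 1, bernoulliFun k (x - a) • g x := by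
  refine intervalIntegral.integral_congr_Ioo_of_le (by linarith) fun x hx ↦ ?_
  have hfloor : ⌊x⌋ = a := Int.floor_eq_on_Ico a x (Ioo_subset_Ico_self hx)
  simp only [Int.fract, hfloor]

variable [CompleteSpace E] {f f' f'' : ℝ → E} {a : ℤ}

lemma integral_bernoulliFun_fract_smul_deriv_unit (k : ℕ)
    (hf : ∀ x ∈ Icc (a : ℝ) (a + 1), HasDerivAt f (f' x) x)
    (hf' : IntervalIntegrable f' volume a (a + 1)) :
    ∫ x in (a : ℝ)..a + 1, bernoulliFun (k + 1) (Int.fract x) • f' x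
      = bernoulliFun (k + 1) 1 • f (a + 1) - bernoulliFun (k + 1) 0 • f a
        - (k + 1 : ℝ) • ∫ x in (a : ℝ)..a + 1, bernoulliFun k (Int.fract x) • f x := by
  have hB (x : ℝ) : HasDerivAt (fun x ↦ bernoulliFun (k + 1) (x - a))
      ((k + 1) * bernoulliFun k (x - a)) x := by
    simpa using (hasDerivAt_bernoulliFun (k + 1) (x - a)).comp_sub_const x (a : ℝ)
  have hB' : Continuous fun x : ℝ ↦ (k + 1) * bernoulliFun k (x - a) :=
    continuous_const.mul ((continuous_bernoulliFun (k := k)).comp (continuous_sub_right _))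
  rw [← uIcc_of_le (by linarith)] at hf
  simp only [integral_bernoulliFun_fract_smul_unit]
  rw [intervalIntegral.integral_smul_deriv_eq_deriv_smul (fun x _ ↦ hB x) hf
    (hB'.intervalIntegrable _ _) hf', ← intervalIntegral.integral_smul]
  simp only [add_sub_cancel_left, sub_self, smul_smul]

lemma integral_bernoulliFun_fract_smul_deriv (k n : ℕ)
    (hf : ∀ x ∈ Icc (a : ℝ) (a + n), HasDerivAt f (f' x) x)
    (hf' : IntervalIntegrable f' volume a (a + n)) :
    ∫ x in (a : ℝ)..a + n, bernoulliFun (k + 1) (Int.fract x) • f' x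
      = ∑ j ∈ Finset.range n,
          (bernoulliFun (k + 1) 1 • f (a + j + 1) - bernoulliFun (k + 1) 0 • f (a + j))
        - (k + 1 : ℝ) • ∫ x in (a : ℝ)..a + n, bernoulliFun k (Int.fract x) • f x := by
  have hfint : IntervalIntegrable f volume a (a + n) :=
    ContinuousOn.intervalIntegrable_of_Icc (by linarith [n.cast_nonneg (α := ℝ)])
      fun x hx ↦ (hf x hx).continuousAt.continuousWithinAt
  rw [← sum_integral_unit_intervals (intervalIntegrable_bernoulliFun_fract_smul _ hf'),
    ← sum_integral_unit_intervals (intervalIntegrable_bernoulliFun_fract_smul _ hfint),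
    Finset.smul_sum, ← Finset.sum_sub_distrib]
  refine Finset.sum_congr rfl fun j hj ↦ ?_
  rw [Finset.mem_range] at hj
  have hunit := integral_bernoulliFun_fract_smul_deriv_unit (f := f) (f' := f') (a := a + j) k
  push_cast at hunit
  exact hunit (fun x hx ↦ hf x (Icc_unit_subset hj hx)) (intervalIntegrable_unit_of_lt hf' hj)

theorem sum_trapezoid_eq_integral_add_integral_bernoulliFun_one (n : ℕ)
    (hf : ∀ x ∈ Icc (a : ℝ) (a + n), HasDerivAt f (f' x) x)
    (hf' : IntervalIntegrable f' volume a (a + n)) :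
    ∑ j ∈ Finset.range n, (1 / 2 : ℝ) • (f (a + j) + f (a + j + 1))
      = (∫ x in (a : ℝ)..a + n, f x)
        + ∫ x in (a : ℝ)..a + n, bernoulliFun 1 (Int.fract x) • f' x := by
  have hparts := integral_bernoulliFun_fract_smul_deriv 0 n hf hf'
  have hB1 : bernoulliFun 1 1 = 1 / 2 := by norm_num
  have hB0 : bernoulliFun 1 0 = -(1 / 2) := by norm_num
  simp only [zero_add, hB1, hB0, bernoulliFun_zero, Nat.cast_zero, one_smul, neg_smul,
    sub_neg_eq_add, ← smul_add] at hparts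
  simp only [hparts, add_comm (f (a + _)), add_sub_cancel]

lemma integral_bernoulliFun_fract_smul_deriv_of_ne_zero {k : ℕ} (hk : k ≠ 0) (n : ℕ)
    (hf : ∀ x ∈ Icc (a : ℝ) (a + n), HasDerivAt f (f' x) x)
    (hf' : IntervalIntegrable f' volume a (a + n)) :
    ∫ x in (a : ℝ)..a + n, bernoulliFun (k + 1) (Int.fract x) • f' x
      = (bernoulli (k + 1) : ℝ) • (f (a + n) - f a)
        - (k + 1 : ℝ) • ∫ x in (a : ℝ)..a + n, bernoulliFun k (Int.fract x) • f x := by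
  have htelescope := Finset.sum_range_sub (fun j : ℕ ↦ f (a + j)) n
  push_cast [← add_assoc, add_zero] at htelescope
  rw [integral_bernoulliFun_fract_smul_deriv k n hf hf',
    bernoulliFun_endpoints_eq_of_ne_one (by omega), bernoulliFun_eval_zero, ← htelescope]
  simp only [← smul_sub, Finset.smul_sum]

theorem sum_trapezoid_eq_integral_sub_integral_bernoulliFun_two (n : ℕ)
    (hf : ∀ x ∈ Icc (a : ℝ) (a + n), HasDerivAt f (f' x) x)
    (hf' : ∀ x ∈ Icc (a : ℝ) (a + n), HasDerivAt f' (f'' x) x)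
    (hf'' : IntervalIntegrable f'' volume a (a + n)) :
    ∑ j ∈ Finset.range n, (1 / 2 : ℝ) • (f (a + j) + f (a + j + 1))
      = (∫ x in (a : ℝ)..a + n, f x) + (1 / 12 : ℝ) • (f' (a + n) - f' a)
        - (1 / 2 : ℝ) • ∫ x in (a : ℝ)..a + n, bernoulliFun 2 (Int.fract x) • f'' x := by
  have hf'int : IntervalIntegrable f' volume a (a + n) :=
    ContinuousOn.intervalIntegrable_of_Icc (by linarith [n.cast_nonneg (α := ℝ)])
      fun x hx ↦ (hf' x hx).continuousAt.continuousWithinAt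
  rw [sum_trapezoid_eq_integral_add_integral_bernoulliFun_one n hf hf'int,
    integral_bernoulliFun_fract_smul_deriv_of_ne_zero one_ne_zero n hf' hf'', bernoulli_two]
  push_cast
  module

end BernoulliFract

lemma sum_trapezoid_log (n : ℕ) :
    ∑ j ∈ Finset.range n, (1 / 2 : ℝ) * (Real.log (1 + j) + Real.log (1 + j + 1))
      = Real.log (n + 1).factorial - Real.log (n + 1) / 2 := by
  induction n with
  | zero => simp
  | succ n ih =>
    rw [Finset.sum_range_succ, ih, Nat.factorial_succ (n + 1), Nat.cast_mul,
      Real.log_mul (by positivity) (by positivity)]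
    push_cast
    ring_nf

lemma log_stirlingSeq_of_ne_zero {n : ℕ} (hn : n ≠ 0) :
    Real.log (Stirling.stirlingSeq n)
      = Real.log n.factorial - (n + 1 / 2) * Real.log n + n - Real.log 2 / 2 := by
  have hn' : (n : ℝ) ≠ 0 := mod_cast hn
  rw [Stirling.log_stirlingSeq_formula, Real.log_mul two_ne_zero hn',
    Real.log_div hn' (Real.exp_ne_zero 1), Real.log_exp]
  ring

lemma integral_bernoulliFun_two_fract_div_two_mul_sq (n : ℕ) :
    ∫ x in (1 : ℝ)..1 + n, bernoulliFun 2 (Int.fract x) / (2 * x ^ 2)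
      = Real.log (Stirling.stirlingSeq (n + 1)) + Real.log 2 / 2 - 11 / 12
        - 1 / ((n : ℝ) + 1) / 12 := by
  have hpos : ∀ x ∈ Icc (1 : ℝ) (1 + n), x ≠ 0 := fun x hx ↦ (one_pos.trans_le hx.1).ne'
  have hf'' : ContinuousOn (fun x : ℝ ↦ -(x ^ 2)⁻¹) (Icc 1 (1 + n)) :=
    ((continuousOn_id.pow 2).inv₀ fun x hx ↦ pow_ne_zero 2 (hpos x hx)).neg
  have heuler := sum_trapezoid_eq_integral_sub_integral_bernoulliFun_two (a := 1) n
    (by simpa using fun x hx ↦ Real.hasDerivAt_log (hpos x hx))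
    (by simpa using fun x hx ↦ hasDerivAt_inv (hpos x hx))
    (by simpa using hf''.intervalIntegrable_of_Icc (by linarith [n.cast_nonneg (α := ℝ)]))
  have hremainder : ∫ x in (1 : ℝ)..1 + n, bernoulliFun 2 (Int.fract x) / (2 * x ^ 2)
      = -(1 / 2) * ∫ x in (1 : ℝ)..1 + n, bernoulliFun 2 (Int.fract x) * -(x ^ 2)⁻¹ := by
    rw [← intervalIntegral.integral_const_mul]
    congr with x
    ring
  simp only [Int.cast_one, smul_eq_mul, sum_trapezoid_log, integral_log] at heuler
  rw [hremainder, log_stirlingSeq_of_ne_zero (Nat.add_one_ne_zero n)]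
  push_cast
  simp only [Real.log_one, inv_one, add_comm (1 : ℝ)] at heuler ⊢
  linear_combination -heuler

lemma integrableOn_bernoulliFun_fract_div_two_mul_sq (k : ℕ) {a : ℝ} (ha : 0 < a) :
    IntegrableOn (fun x ↦ bernoulliFun k (Int.fract x) / (2 * x ^ 2)) (Ioi a) := by
  have hrpow : IntegrableOn (fun x : ℝ ↦ x ^ (-2 : ℝ)) (Ioi a) :=
    integrableOn_Ioi_rpow_of_lt (by norm_num) ha
  refine (integrable_bernoulliFun_fract_smul k (hrpow.const_mul 2⁻¹)).congr <|
    (ae_restrict_mem measurableSet_Ioi).mono fun x (hx : a < x) ↦ ?_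
  simp only [Real.rpow_neg (ha.trans hx).le, Real.rpow_two, smul_eq_mul, div_eq_mul_inv,
    mul_inv]

theorem stmt_18 :
    (∫ x in Set.Ioi (1:ℝ), ((Int.fract x) ^ 2 - Int.fract x + 1/6) / (2 * x ^ 2))
      = Real.log (2 * Real.pi) / 2 - 11/12 := by
  have hintegral := intervalIntegral_tendsto_integral_Ioi 1
    (integrableOn_bernoulliFun_fract_div_two_mul_sq 2 one_pos)
    (Filter.tendsto_atTop_add_const_left _ (1 : ℝ) tendsto_natCast_atTop_atTop)
  simp only [integral_bernoulliFun_two_fract_div_two_mul_sq] at hintegral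
  have hstirling := (Stirling.tendsto_stirlingSeq_sqrt_pi.comp
    (Filter.tendsto_add_atTop_nat 1)).log (by positivity)
  have hinv := (tendsto_one_div_add_atTop_nhds_zero_nat (𝕜 := ℝ)).div_const 12
  have hlimit := tendsto_nhds_unique hintegral
    (((hstirling.add_const (Real.log 2 / 2)).sub_const (11 / 12)).sub hinv)
  simp only [bernoulliFun_two, ← one_div] at hlimit
  rw [hlimit, Real.log_sqrt Real.pi_pos.le, Real.log_mul two_ne_zero Real.pi_ne_zero]
  ring
end
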